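/- arXiv:1304.3822 — 4 statements merged into one kernel-verified Lean document; each statement's English description precedes it below -/
import Mathlib

section
/- Let σ ⊆ ℝⁿ be a closed convex cone and let Δ, Δ', Γ be polyhedra with tailcone σ (each of the form conv of a nonempty finite set plus σ). If Δ + Γ = Δ' + Γ (Minkowski sums), then Δ = Δ'. That is, the monoid of polyhedra with tailcone σ under Minkowski addition is cancellative. -/
open scoped Pointwise RealInnerProductSpace

theorem radstrom_aux {n : ℕ} (A B C : Set (EuclideanSpace ℝ (Fin n)))
    (hB : IsCompact B) (hBn : B.Nonempty) (hC : IsClosed C) (hCc : Convex ℝ C)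
    (h : A + B ⊆ C + B) : A ⊆ C := by
  intro a ha
  by_contra hna
  obtain ⟨f, u, hfa, hfc⟩ := geometric_hahn_banach_point_closed hCc hC hna
  obtain ⟨b, hb, hmin⟩ := hB.exists_isMinOn hBn f.continuous.continuousOn
  obtain ⟨c, hc, b', hb', hcb⟩ := Set.mem_add.1 (h (Set.add_mem_add ha hb))
  have h1 := congrArg f hcb
  have h2 : f b ≤ f b' := hmin hb'
  have h3 := hfc c hc
  rw [map_add, map_add] at h1
  linarith

theorem minkowski_addition_cancellative {n : ℕ} (hn : 1 ≤ n)
    (σ : Set (EuclideanSpace ℝ (Fin n)))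
    (hclosed : IsClosed σ) (hconv : Convex ℝ σ)
    (hcone : ∀ x ∈ σ, ∀ t : ℝ, 0 < t → t • x ∈ σ)
    (hzero : (0 : EuclideanSpace ℝ (Fin n)) ∈ σ)
    (V V' W : Finset (EuclideanSpace ℝ (Fin n)))
    (hV : V.Nonempty) (hV' : V'.Nonempty) (hW : W.Nonempty)
    (Δ Δ' Γ : Set (EuclideanSpace ℝ (Fin n)))
    (hΔ : Δ = convexHull ℝ (V : Set (EuclideanSpace ℝ (Fin n))) + σ)
    (hΔ' : Δ' = convexHull ℝ (V' : Set (EuclideanSpace ℝ (Fin n))) + σ)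
    (hΓ : Γ = convexHull ℝ (W : Set (EuclideanSpace ℝ (Fin n))) + σ)
    (hsum : Δ + Γ = Δ' + Γ) :
    Δ = Δ' := by
  have hσσ : σ + σ = σ := by
    apply Set.Subset.antisymm
    · rintro _ ⟨x, hx, y, hy, rfl⟩
      have h := hcone _ (hconv hx hy (by norm_num : (0 : ℝ) ≤ 1 / 2)
        (by norm_num : (0 : ℝ) ≤ 1 / 2) (by norm_num)) 2 (by norm_num)
      simpa [smul_add, smul_smul] using h
    · intro x hx
      exact ⟨x, hx, 0, hzero, add_zero x⟩
  have key : ∀ K L : Set (EuclideanSpace ℝ (Fin n)), (K + σ) + (L + σ) = (K + σ) + L := by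
    intro K L
    rw [add_add_add_comm, hσσ, add_right_comm]
  have hcpt : ∀ U : Finset (EuclideanSpace ℝ (Fin n)),
      IsCompact (convexHull ℝ (U : Set (EuclideanSpace ℝ (Fin n)))) :=
    fun U => U.finite_toSet.isCompact_convexHull ℝ
  have hcl : ∀ U : Finset (EuclideanSpace ℝ (Fin n)),
      IsClosed (convexHull ℝ (U : Set (EuclideanSpace ℝ (Fin n))) + σ) :=
    fun U => hclosed.add_left_of_isCompact (hcpt U)
  have hcx : ∀ U : Finset (EuclideanSpace ℝ (Fin n)),
      Convex ℝ (convexHull ℝ (U : Set (EuclideanSpace ℝ (Fin n))) + σ) :=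
    fun U => (convex_convexHull ℝ _).add hconv
  have hWn : (convexHull ℝ (W : Set (EuclideanSpace ℝ (Fin n)))).Nonempty :=
    convexHull_nonempty_iff.2 (by exact_mod_cast hW)
  subst hΔ hΔ' hΓ
  rw [key, key] at hsum
  exact Set.Subset.antisymm
    (radstrom_aux _ _ _ (hcpt W) hWn (hcl V') (hcx V') hsum.subset)
    (radstrom_aux _ _ _ (hcpt W) hWn (hcl V) (hcx V) hsum.symm.subset)
end

section
/- Let σ ⊆ ℝⁿ be a pointed polyhedral cone (σ is the set of nonnegative combinations of finitely many vectors and σ ∩ (−σ) = {0}). Let h : σ^∨ → ℝ be a continuous function for which there exist finitely many polyhedral cones τ₁, …, τ_m with σ^∨ = τ₁ ∪ ⋯ ∪ τ_m and vectors v₁, …, v_m ∈ ℝⁿ with h(u) = ⟨v_i, u⟩ for all u ∈ τ_i. Then there exist nonempty finite sets V₁, V₂ ⊆ ℝⁿ such that h(u) = h_{conv(V₁)+σ}(u) − h_{conv(V₂)+σ}(u) for all u ∈ σ^∨, i.e. h is a difference of support functions of polyhedra with tailcone σ. -/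
open scoped Pointwise RealInnerProductSpace

/-- The support function `h_Δ(u) = inf_{v ∈ Δ} ⟨v, u⟩` of a subset `Δ ⊆ ℝⁿ`. -/
noncomputable def suppFn {n : ℕ} (Δ : Set (EuclideanSpace ℝ (Fin n)))
    (u : EuclideanSpace ℝ (Fin n)) : ℝ :=
  sInf ((fun x => ⟪x, u⟫) '' Δ)


/-- `F` is the pointwise minimum of finitely many linear functionals. -/
def IsMinLin {n : ℕ} (F : EuclideanSpace ℝ (Fin n) → ℝ) : Prop :=
  ∃ V : Finset (EuclideanSpace ℝ (Fin n)), V.Nonempty ∧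
    ∀ u, IsLeast ((fun x => ⟪x, u⟫) '' (V : Set (EuclideanSpace ℝ (Fin n)))) (F u)

theorem IsMinLin.add {n : ℕ} {F H : EuclideanSpace ℝ (Fin n) → ℝ} (hF : IsMinLin F)
    (hH : IsMinLin H) : IsMinLin (F + H) := by
  classical
  obtain ⟨V, hV, hF⟩ := hF
  obtain ⟨W, hW, hH⟩ := hH
  refine ⟨V + W, hV.add hW, fun u => ?_⟩
  obtain ⟨⟨a, ha, ha'⟩, hFl⟩ := hF u
  obtain ⟨⟨b, hb, hb'⟩, hHl⟩ := hH u
  constructor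
  · refine ⟨a + b, ?_, ?_⟩
    · exact_mod_cast Finset.add_mem_add (by exact_mod_cast ha) (by exact_mod_cast hb)
    · simp only [inner_add_left, Pi.add_apply] at *
      rw [ha', hb']
  · rintro _ ⟨x, hx, rfl⟩
    obtain ⟨y, hy, z, hz, rfl⟩ := Finset.mem_add.1 (Finset.mem_coe.1 hx)
    simp only [inner_add_left, Pi.add_apply]
    exact add_le_add (hFl ⟨y, hy, rfl⟩) (hHl ⟨z, hz, rfl⟩)

theorem IsMinLin.inf {n : ℕ} {F H : EuclideanSpace ℝ (Fin n) → ℝ} (hF : IsMinLin F)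
    (hH : IsMinLin H) : IsMinLin (F ⊓ H) := by
  classical
  obtain ⟨V, hV, hF⟩ := hF
  obtain ⟨W, hW, hH⟩ := hH
  refine ⟨V ∪ W, hV.mono Finset.subset_union_left, fun u => ?_⟩
  rw [Finset.coe_union, Set.image_union]
  exact (hF u).union (hH u)

/-- `F` is a difference of two minima of finitely many linear functionals. -/
def IsDiffLin {n : ℕ} (F : EuclideanSpace ℝ (Fin n) → ℝ) : Prop :=
  ∃ A B : EuclideanSpace ℝ (Fin n) → ℝ, IsMinLin A ∧ IsMinLin B ∧ F = A - B

theorem IsMinLin.zero {n : ℕ} : IsMinLin (0 : EuclideanSpace ℝ (Fin n) → ℝ) :=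
  ⟨{0}, by simp, fun u => by simp⟩

theorem IsDiffLin.sup {n : ℕ} {F H : EuclideanSpace ℝ (Fin n) → ℝ} (hF : IsDiffLin F)
    (hH : IsDiffLin H) : IsDiffLin (F ⊔ H) := by
  obtain ⟨a, b, ha, hb, rfl⟩ := hF
  obtain ⟨c, d, hc, hd, rfl⟩ := hH
  refine ⟨(a + d) + (c + b), ((a + d) ⊓ (c + b)) + (b + d), (ha.add hd).add (hc.add hb),
    ((ha.add hd).inf (hc.add hb)).add (hb.add hd), ?_⟩
  ext u
  simp only [Pi.sup_apply, Pi.sub_apply, Pi.add_apply, Pi.inf_apply]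
  rcases le_total (a u + d u) (c u + b u) with h | h
  · rw [inf_eq_left.2 h, sup_eq_right.2 (by linarith)]; ring
  · rw [inf_eq_right.2 h, sup_eq_left.2 (by linarith)]; ring

/-- On the dual cone, a minimum of linear functionals is the support function. -/
theorem suppFn_eq {n : ℕ} (σ : Set (EuclideanSpace ℝ (Fin n))) (h0 : 0 ∈ σ)
    (V : Finset (EuclideanSpace ℝ (Fin n))) (u : EuclideanSpace ℝ (Fin n))
    (hu : ∀ s ∈ σ, 0 ≤ ⟪u, s⟫) (r : ℝ)
    (hr : IsLeast ((fun x => ⟪x, u⟫) '' (V : Set (EuclideanSpace ℝ (Fin n)))) r) :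
    suppFn (convexHull ℝ (V : Set (EuclideanSpace ℝ (Fin n))) + σ) u = r := by
  apply IsLeast.csInf_eq
  obtain ⟨⟨a, ha, ha'⟩, hl⟩ := hr
  constructor
  · exact ⟨a, ⟨a, subset_convexHull ℝ _ ha, 0, h0, add_zero a⟩, ha'⟩
  · rintro _ ⟨_, ⟨x, hx, s, hs, rfl⟩, rfl⟩
    have hc : Convex ℝ {x : EuclideanSpace ℝ (Fin n) | r ≤ ⟪x, u⟫} :=
      convex_halfSpace_ge (f := fun x : EuclideanSpace ℝ (Fin n) => ⟪x, u⟫)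
        ⟨fun x y => inner_add_left x y u, fun c x => by simp [inner_smul_left]⟩ r
    have h1 : r ≤ ⟪x, u⟫ := convexHull_min (fun y hy => hl ⟨y, hy, rfl⟩) hc hx
    have h2 := hu s hs
    rw [real_inner_comm] at h2
    simp only [inner_add_left]
    linarith

/-- One-dimensional crossing lemma. -/
theorem crossing {m : ℕ} (f : ℝ → ℝ) (hf : ContinuousOn f (Set.Icc 0 1)) (a b : Fin m → ℝ)
    (hsel : ∀ t ∈ Set.Icc (0 : ℝ) 1, ∃ i, f t = a i + t * b i) :
    ∃ i, a i ≤ f 0 ∧ f 1 ≤ a i + b i := by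
  let A : Set ℝ := {t | ∃ i, a i ≤ f 0 ∧ f t ≤ a i + t * b i}
  have hlc : ∀ i, ContinuousOn (fun t : ℝ => a i + t * b i) (Set.Icc 0 1) := fun i => by fun_prop
  have hA : IsClosed (A ∩ Set.Icc 0 1) := by
    have : A ∩ Set.Icc 0 1 = ⋃ i, {t | t ∈ Set.Icc (0:ℝ) 1 ∧ (a i ≤ f 0 ∧ f t ≤ a i + t * b i)} := by
      ext t
      simp only [A, Set.mem_inter_iff, Set.mem_ofPred_eq, Set.mem_iUnion]
      constructor
      · rintro ⟨⟨i, h⟩, ht⟩; exact ⟨i, ht, h⟩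
      · rintro ⟨i, ht, h⟩; exact ⟨⟨i, h⟩, ht⟩
    rw [this]
    refine isClosed_iUnion_of_finite fun i => ?_
    by_cases hi : a i ≤ f 0
    · simp only [hi, true_and]
      exact isClosed_Icc.isClosed_le hf (hlc i)
    · simp [hi]
  have h0 : (0 : ℝ) ∈ A := by
    obtain ⟨i, hi⟩ := hsel 0 (by simp)
    exact ⟨i, by simp [hi], by simp [hi]⟩
  have key : Set.Icc (0 : ℝ) 1 ⊆ A := by
    refine hA.Icc_subset_of_forall_exists_gt h0 ?_
    rintro s ⟨⟨i, hi, hsi⟩, hs⟩ y hy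
    have hy : s < y := hy
    have hsI : s ∈ Set.Icc (0 : ℝ) 1 := ⟨hs.1, hs.2.le⟩
    have hfs := hf s hsI
    have hev1 : ∀ᶠ t in nhdsWithin s (Set.Icc 0 1), ∀ j, a j + s * b j ≠ f s → a j + t * b j ≠ f t := by
      rw [Filter.eventually_all]
      intro j
      by_cases hj : a j + s * b j = f s
      · simp [hj]
      · have := ((hlc j) s hsI).sub hfs
        filter_upwards [this.eventually_ne (sub_ne_zero.2 hj)] with t ht _
        exact sub_ne_zero.1 ht
    have hev2 : ∀ᶠ t in nhdsWithin s (Set.Icc 0 1), f s < a i + s * b i → f t < a i + t * b i := by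
      by_cases hj : f s < a i + s * b i
      · have := ((hlc i) s hsI).sub hfs
        filter_upwards [this.eventually (lt_mem_nhds (sub_pos.2 hj))] with t ht _
        exact sub_pos.1 ht
      · simp [hj]
    have hle : nhdsWithin s (Set.Ioc s (min y 1)) ≤ nhdsWithin s (Set.Icc 0 1) :=
      nhdsWithin_mono _ fun t ht => ⟨hs.1.trans ht.1.le, ht.2.trans (min_le_right _ _)⟩
    have hlt : s < min y 1 := lt_min hy hs.2
    have hne : (nhdsWithin s (Set.Ioc s (min y 1))).NeBot := by
      rw [nhdsWithin_Ioc_eq_nhdsGT hlt]; infer_instance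
    obtain ⟨t, ⟨h1, h2⟩, ht⟩ :=
      (((hev1.filter_mono hle).and (hev2.filter_mono hle)).and self_mem_nhdsWithin).exists
    have htI : t ∈ Set.Icc (0:ℝ) 1 := ⟨hs.1.trans ht.1.le, ht.2.trans (min_le_right _ _)⟩
    refine ⟨t, ?_, ht.1, ht.2.trans (min_le_left _ _)⟩
    rcases hsi.lt_or_eq with hlt' | heq
    · exact ⟨i, hi, (h2 hlt').le⟩
    obtain ⟨j, hj⟩ := hsel t htI
    have hjs : a j + s * b j = f s := by
      by_contra hcon
      exact h1 j hcon hj.symm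
    by_cases haj : a j ≤ f 0
    · exact ⟨j, haj, hj.le⟩
    · refine ⟨i, hi, ?_⟩
      rw [hj]
      push Not at haj
      have hst : s < t := ht.1
      have hs0 : 0 ≤ s := hs.1
      have hb : b j ≤ b i := by
        by_contra hcon
        push Not at hcon
        nlinarith [mul_le_mul_of_nonneg_left hcon.le hs0]
      nlinarith [mul_le_mul_of_nonneg_left hb (sub_nonneg.2 hst.le)]
  obtain ⟨i, hi, h1⟩ := key (show (1:ℝ) ∈ Set.Icc (0:ℝ) 1 by simp)
  exact ⟨i, hi, by simpa using h1⟩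

theorem piecewise_linear_is_difference_of_support_functions {n : ℕ} (hn : 1 ≤ n)
    (σ : Set (EuclideanSpace ℝ (Fin n)))
    (G : Finset (EuclideanSpace ℝ (Fin n)))
    (hσ : σ = {x | ∃ c : G → ℝ, (∀ g, 0 ≤ c g) ∧ x = ∑ g, c g • (g : EuclideanSpace ℝ (Fin n))})
    (hpointed : ∀ x ∈ σ, -x ∈ σ → x = 0)
    (m : ℕ) (τ : Fin m → Set (EuclideanSpace ℝ (Fin n)))
    (hτpoly : ∀ i, ∃ T : Finset (EuclideanSpace ℝ (Fin n)),
      τ i = {x | ∃ c : T → ℝ, (∀ t, 0 ≤ c t) ∧ x = ∑ t, c t • (t : EuclideanSpace ℝ (Fin n))})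
    (hcover : {u : EuclideanSpace ℝ (Fin n) | ∀ s ∈ σ, 0 ≤ ⟪u, s⟫} = ⋃ i, τ i)
    (h : EuclideanSpace ℝ (Fin n) → ℝ)
    (hcont : ContinuousOn h {u : EuclideanSpace ℝ (Fin n) | ∀ s ∈ σ, 0 ≤ ⟪u, s⟫})
    (v : Fin m → EuclideanSpace ℝ (Fin n))
    (hlin : ∀ i, ∀ u ∈ τ i, h u = ⟪v i, u⟫) :
    ∃ V₁ V₂ : Finset (EuclideanSpace ℝ (Fin n)), V₁.Nonempty ∧ V₂.Nonempty ∧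
      ∀ u : EuclideanSpace ℝ (Fin n), (∀ s ∈ σ, 0 ≤ ⟪u, s⟫) →
        h u = suppFn (convexHull ℝ (V₁ : Set (EuclideanSpace ℝ (Fin n))) + σ) u -
              suppFn (convexHull ℝ (V₂ : Set (EuclideanSpace ℝ (Fin n))) + σ) u := by
  classical
  have h0 : (0 : EuclideanSpace ℝ (Fin n)) ∈ σ := by
    rw [hσ]; exact ⟨0, by simp, by simp⟩
  set C : Set (EuclideanSpace ℝ (Fin n)) := {u | ∀ s ∈ σ, 0 ≤ ⟪u, s⟫} with hC
  have hsel : ∀ u ∈ C, ∃ i, h u = ⟪v i, u⟫ := by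
    intro u hu
    rw [hcover] at hu
    obtain ⟨i, hi⟩ := Set.mem_iUnion.1 hu
    exact ⟨i, hlin i u hi⟩
  have hseg : ∀ x ∈ C, ∀ y ∈ C, ∀ t ∈ Set.Icc (0:ℝ) 1, x + t • (y - x) ∈ C := by
    intro x hx y hy t ht s hs
    have e : ⟪x + t • (y - x), s⟫ = (1 - t) * ⟪x, s⟫ + t * ⟪y, s⟫ := by
      rw [inner_add_left, real_inner_smul_left, inner_sub_left]; ring
    rw [e]
    exact add_nonneg (mul_nonneg (sub_nonneg.2 ht.2) (hx s hs)) (mul_nonneg ht.1 (hy s hs))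
  have hcross : ∀ x ∈ C, ∀ y ∈ C, ∃ i, ⟪v i, x⟫ ≤ h x ∧ h y ≤ ⟪v i, y⟫ := by
    intro x hx y hy
    obtain ⟨i, h1, h2⟩ := crossing (fun t : ℝ => h (x + t • (y - x)))
      (hcont.comp (by fun_prop) (fun t ht => hseg x hx y hy t ht))
      (fun i => ⟪v i, x⟫) (fun i => ⟪v i, y - x⟫) (fun t ht => by
        obtain ⟨i, hi⟩ := hsel _ (hseg x hx y hy t ht)
        exact ⟨i, by rw [hi, inner_add_right, real_inner_smul_right]⟩)
    refine ⟨i, by simpa using h1, ?_⟩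
    rw [← inner_add_right] at h2
    simpa using h2
  let S : EuclideanSpace ℝ (Fin n) → Finset (Fin m) :=
    fun y => Finset.univ.filter fun i => h y ≤ ⟪v i, y⟫
  let P : Finset (Fin m) → EuclideanSpace ℝ (Fin n) → ℝ :=
    fun T u => sInf ((fun x => ⟪x, u⟫) '' ((T.image v : Finset _) : Set (EuclideanSpace ℝ (Fin n))))
  have hP : ∀ T : Finset (Fin m), T.Nonempty → ∀ u,
      IsLeast ((fun x => ⟪x, u⟫) '' ((T.image v : Finset _) : Set (EuclideanSpace ℝ (Fin n))))
        (P T u) := by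
    intro T hT u
    have hfin : ((fun x => ⟪x, u⟫) ''
        ((T.image v : Finset _) : Set (EuclideanSpace ℝ (Fin n)))).Finite :=
      (Finset.finite_toSet _).image _
    have hne : ((fun x => ⟪x, u⟫) ''
        ((T.image v : Finset _) : Set (EuclideanSpace ℝ (Fin n)))).Nonempty :=
      Set.Nonempty.image _ (by exact_mod_cast hT.image v)
    exact ⟨hne.csInf_mem hfin, fun x hx => csInf_le hfin.bddBelow hx⟩
  have hSne : ∀ y ∈ C, (S y).Nonempty := by
    intro y hy
    obtain ⟨i, hi⟩ := hsel y hy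
    exact ⟨i, by simp [S, hi]⟩
  let 𝓢 : Finset (Finset (Fin m)) := Finset.univ.filter fun T => ∃ y ∈ C, T = S y
  have hmem : ∀ y ∈ C, S y ∈ 𝓢 := fun y hy => by
    simp only [𝓢, Finset.mem_filter, Finset.mem_univ, true_and]
    exact ⟨y, hy, rfl⟩
  have h0C : (0 : EuclideanSpace ℝ (Fin n)) ∈ C := fun s _ => by simp
  have h𝓢 : 𝓢.Nonempty := ⟨_, hmem 0 h0C⟩
  have hrep : ∀ u ∈ C, h u = (𝓢.sup' h𝓢 P) u := by
    intro u hu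
    rw [Finset.sup'_apply]
    apply le_antisymm
    · refine le_trans ?_ (Finset.le_sup' (fun T => P T u) (hmem u hu))
      obtain ⟨x, hx, hx'⟩ := (hP (S u) (hSne u hu) u).1
      obtain ⟨i, hi, rfl⟩ := Finset.mem_image.1 (Finset.mem_coe.1 hx)
      simp only at hx'
      rw [← hx']
      exact (Finset.mem_filter.1 hi).2
    · refine Finset.sup'_le _ _ fun T hT => ?_
      obtain ⟨y, hy, rfl⟩ := (Finset.mem_filter.1 hT).2
      obtain ⟨i, h1, h2⟩ := hcross u hu y hy
      refine le_trans ((hP (S y) (hSne y hy) u).2 ⟨v i, ?_, rfl⟩) h1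
      exact Finset.mem_coe.2 (Finset.mem_image_of_mem v (by simp [S, h2]))
  have hD : IsDiffLin (𝓢.sup' h𝓢 P) := by
    refine Finset.sup'_induction h𝓢 P (fun a ha b hb => ha.sup hb) fun T hT => ?_
    obtain ⟨y, hy, rfl⟩ := (Finset.mem_filter.1 hT).2
    exact ⟨P (S y), 0, ⟨_, (hSne y hy).image v, hP _ (hSne y hy)⟩, IsMinLin.zero, by simp⟩
  obtain ⟨A, B, ⟨V, hV, hA⟩, ⟨W, hW, hB⟩, hAB⟩ := hD
  refine ⟨V, W, hV, hW, fun u hu => ?_⟩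
  rw [suppFn_eq σ h0 V u hu _ (hA u), suppFn_eq σ h0 W u hu _ (hB u), hrep u hu, hAB]
  rfl
end

section
/- Let Σ be a finite collection of closed convex cones in ℝⁿ such that for all σ, τ ∈ Σ the intersection σ ∩ τ is an exposed face of σ and an exposed face of τ. Suppose u, v ∈ σ for some σ ∈ Σ and u + v ∈ τ for some τ ∈ Σ. Then u ∈ τ and v ∈ τ (and hence u, v, u + v all lie in the common cone σ ∩ τ). -/
open scoped Pointwise RealInnerProductSpace

theorem quasifan_sum_compatibility {n : ℕ} (hn : 1 ≤ n)
    (S : Set (Set (EuclideanSpace ℝ (Fin n)))) (hfin : S.Finite)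
    (hclosed : ∀ σ ∈ S, IsClosed σ)
    (hconv : ∀ σ ∈ S, Convex ℝ σ)
    (hcone : ∀ σ ∈ S, ∀ x ∈ σ, ∀ t : ℝ, 0 < t → t • x ∈ σ)
    (hface : ∀ σ ∈ S, ∀ τ ∈ S, IsExposed ℝ σ (σ ∩ τ) ∧ IsExposed ℝ τ (σ ∩ τ))
    (σ τ : Set (EuclideanSpace ℝ (Fin n))) (hσ : σ ∈ S) (hτ : τ ∈ S)
    (u v : EuclideanSpace ℝ (Fin n)) (hu : u ∈ σ) (hv : v ∈ σ) (huv : u + v ∈ τ) :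
    u ∈ σ ∩ τ ∧ v ∈ σ ∩ τ ∧ u + v ∈ σ ∩ τ := by
  have hm : u + v ∈ σ := by
    have h := hconv σ hσ hu hv (a := 1/2) (b := 1/2) (by norm_num) (by norm_num) (by norm_num)
    have h2 := hcone σ hσ _ h 2 (by norm_num)
    rw [smul_add, smul_smul, smul_smul] at h2
    norm_num at h2
    exact h2
  obtain ⟨l, hl⟩ := (hface σ hσ τ hτ).1 ⟨u + v, hm, huv⟩
  have hmem : u + v ∈ σ ∩ τ := ⟨hm, huv⟩
  have hmax := hmem
  rw [hl] at hmax
  have hmax' := hmax.2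
  have h1 := hmax' _ (hcone σ hσ _ hm 2 (by norm_num))
  have h2 := hmax' _ (hcone σ hσ _ hm (1/2) (by norm_num))
  have h3 := hmax' u hu
  have h4 := hmax' v hv
  simp only [map_smul, map_add, smul_eq_mul] at h1 h2 h3 h4
  refine ⟨?_, ?_, hmem⟩
  · rw [hl]
    refine ⟨hu, fun y hy => ?_⟩
    have h5 := hmax' y hy
    rw [map_add] at h5
    linarith
  · rw [hl]
    refine ⟨hv, fun y hy => ?_⟩
    have h5 := hmax' y hy
    rw [map_add] at h5
    linarith
end

section
/- Let Δ₁, …, Δ_k ⊆ ℝⁿ be finitely many polyhedra (each of the form conv(V_i) + σ_i with V_i a nonempty finite set and σ_i a polyhedral cone), each with nonempty interior, such that Δ₁ ∪ ⋯ ∪ Δ_k = ℝⁿ and for all i ≠ j the intersection Δ_i ∩ Δ_j is an exposed face of Δ_i and an exposed face of Δ_j. Let h : ℝⁿ → ℝ be continuous and suppose for each i there is an affine map g_i : ℝⁿ → ℝ with h(x) = g_i(x) for all x ∈ Δ_i. Then h is concave if and only if for every pair (i, j) such that the affine span of Δ_i ∩ Δ_j has dimension n − 1, there exists a point v ∈ Δ_j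 \ Δ_i with h(v) ≤ g_i(v). -/
open scoped Pointwise RealInnerProductSpace

/-- The cone generated by a finite set. -/
def fgCone {E : Type*} [AddCommGroup E] [Module ℝ E] (G : Finset E) : Set E :=
  {x | ∃ c : E → ℝ, (∀ g ∈ G, 0 ≤ c g) ∧ x = ∑ g ∈ G, c g • g}

theorem fgCone_reduce {E : Type*} [AddCommGroup E] [Module ℝ E] [DecidableEq E] (G : Finset E)
    (hG : ¬ LinearIndepOn ℝ id (G : Set E)) :
    fgCone G = ⋃ g ∈ G, fgCone (G.erase g) := by
  apply Set.Subset.antisymm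
  · rintro x ⟨c, hc, rfl⟩
    rw [linearIndepOn_finset_iff] at hG
    push Not at hG
    obtain ⟨d, hd, g0, hg0, hd0⟩ := hG
    obtain ⟨d, hd, g0, hg0, hd0⟩ : ∃ d : E → ℝ, ∑ i ∈ G, d i • i = 0 ∧ ∃ g ∈ G, 0 < d g := by
      rcases lt_or_gt_of_ne hd0 with h | h
      · refine ⟨-d, ?_, g0, hg0, by simpa using h⟩
        simpa using hd
      · exact ⟨d, by simpa using hd, g0, hg0, h⟩
    obtain ⟨m, hm, hmin⟩ := Finset.exists_min_image (G.filter (fun g => 0 < d g))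
      (fun g => c g / d g) ⟨g0, by simp [hg0, hd0]⟩
    simp only [Finset.mem_filter] at hm hmin
    simp only [Set.mem_iUnion]
    refine ⟨m, hm.1, fun g => c g - (c m / d m) * d g, ?_, ?_⟩
    · intro g hg
      have hgG := Finset.mem_of_mem_erase hg
      have hcm : 0 ≤ c m / d m := div_nonneg (hc m hm.1) hm.2.le
      rcases lt_or_ge 0 (d g) with h | h
      · have := hmin g ⟨hgG, h⟩
        rw [le_div_iff₀ h] at this
        linarith
      · have := mul_nonpos_of_nonneg_of_nonpos hcm h
        have := hc g hgG
        linarith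
    · have h1 : ∑ g ∈ G, (c g - (c m / d m) * d g) • g = ∑ g ∈ G, c g • g := by
        simp only [sub_smul, mul_smul, Finset.sum_sub_distrib, ← Finset.smul_sum, hd]
        simp
      rw [← h1, ← Finset.add_sum_erase _ _ hm.1]
      have : c m - c m / d m * d m = 0 := by
        have := hm.2.ne'
        field_simp
        ring
      rw [this]; simp
  · intro x hx
    simp only [Set.mem_iUnion] at hx
    obtain ⟨m, hm, c, hc, rfl⟩ := hx
    refine ⟨fun g => if g = m then 0 else c g, ?_, ?_⟩
    · intro g hg
      dsimp only
      split_ifs with h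
      · exact le_rfl
      · exact hc g (Finset.mem_erase.2 ⟨h, hg⟩)
    · rw [← Finset.add_sum_erase _ _ hm]
      simp only [if_true, zero_smul, zero_add]
      refine Finset.sum_congr rfl fun g hg => ?_
      rw [if_neg (Finset.ne_of_mem_erase hg)]

theorem isClosed_fgCone_of_indep {E : Type*} [NormedAddCommGroup E] [NormedSpace ℝ E]
    (G : Finset E) (hG : LinearIndepOn ℝ id (G : Set E)) : IsClosed (fgCone G) := by
  classical
  have hinj : Function.Injective (Fintype.linearCombination ℝ (fun g : G => (g : E))) :=
    linearIndependent_iff_injective_fintypeLinearCombination.1 hG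
  have hemb := LinearMap.isClosedEmbedding_of_injective (LinearMap.ker_eq_bot.2 hinj)
  have hcl : IsClosed {c : G → ℝ | ∀ g, 0 ≤ c g} := by
    simp only [Set.ofPred_forall]
    exact isClosed_iInter fun g => isClosed_le continuous_const (continuous_apply g)
  convert hemb.isClosedMap _ hcl using 1
  ext x
  constructor
  · rintro ⟨c, hc, rfl⟩
    refine ⟨fun g => c g, fun g => hc g g.2, ?_⟩
    rw [Fintype.linearCombination_apply]
    exact Finset.sum_coe_sort G (fun g => c g • g)
  · rintro ⟨c, hc, rfl⟩
    refine ⟨fun g => if h : g ∈ G then c ⟨g, h⟩ else 0, ?_, ?_⟩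
    · intro g hg
      simpa [hg] using hc ⟨g, hg⟩
    · rw [Fintype.linearCombination_apply, ← Finset.sum_coe_sort G]
      refine Finset.sum_congr rfl fun g _ => ?_
      simp

theorem isClosed_fgCone {E : Type*} [NormedAddCommGroup E] [NormedSpace ℝ E]
    (G : Finset E) : IsClosed (fgCone G) := by
  classical
  induction G using Finset.strongInduction with
  | H G ih =>
    by_cases hG : LinearIndepOn ℝ id (G : Set E)
    · exact isClosed_fgCone_of_indep G hG
    · rw [fgCone_reduce G hG]
      exact G.finite_toSet.isClosed_biUnion fun g hg => ih _ (Finset.erase_ssubset hg)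

theorem isClosed_polyhedron {E : Type*} [NormedAddCommGroup E] [NormedSpace ℝ E]
    (V G : Finset E) : IsClosed (convexHull ℝ (V : Set E) +
        {x | ∃ c : G → ℝ, (∀ g, 0 ≤ c g) ∧ x = ∑ g, c g • (g : E)}) := by
  classical
  refine IsClosed.add_left_of_isCompact ?_ (V.finite_toSet.isCompact_convexHull (𝕜 := ℝ))
  convert isClosed_fgCone G using 1
  ext x
  constructor
  · rintro ⟨c, hc, rfl⟩
    refine ⟨fun g => if h : g ∈ G then c ⟨g, h⟩ else 0, ?_, ?_⟩
    · intro g hg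
      simpa [hg] using hc ⟨g, hg⟩
    · rw [← Finset.sum_coe_sort G]
      refine Finset.sum_congr rfl fun g _ => ?_
      simp
  · rintro ⟨c, hc, rfl⟩
    refine ⟨fun g => c g, fun g => hc g g.2, ?_⟩
    exact (Finset.sum_coe_sort G (fun g => c g • g)).symm

/-- A continuous function on the unit interval with local affine upper supports lies above its
chord. -/
theorem chord_le (φ : ℝ → ℝ) (hφ : Continuous φ)
    (hloc : ∀ t ∈ Set.Ioo (0 : ℝ) 1, ∃ s : ℝ, ∀ᶠ u in nhds t, φ u ≤ φ t + s * (u - t))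
    (t : ℝ) (ht : t ∈ Set.Icc (0 : ℝ) 1) : (1 - t) * φ 0 + t * φ 1 ≤ φ t := by
  set ψ : ℝ → ℝ := fun u => φ u - ((1 - u) * φ 0 + u * φ 1) with hψ
  have hψc : Continuous ψ := by fun_prop
  obtain ⟨m, hm, hmin⟩ := isCompact_Icc.exists_isMinOn (⟨0, by simp⟩ : (Set.Icc (0:ℝ) 1).Nonempty)
    hψc.continuousOn
  have hmin' : ∀ u ∈ Set.Icc (0:ℝ) 1, ψ m ≤ ψ u := fun u hu => hmin hu
  suffices h0 : 0 ≤ ψ m by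
    have := hmin' t ht
    simp only [hψ] at this h0
    linarith
  by_contra! hneg
  have hcpt : IsCompact (Set.Icc (0:ℝ) 1 ∩ {u | ψ u = ψ m}) :=
    isCompact_Icc.inter_right (isClosed_eq hψc continuous_const)
  obtain ⟨p, ⟨hp, hpm⟩, hpleast⟩ := hcpt.exists_isLeast ⟨m, hm, rfl⟩
  simp only [Set.mem_ofPred_eq] at hpm
  have hψ0 : ψ 0 = 0 := by simp [hψ]
  have hψ1 : ψ 1 = 0 := by simp [hψ]
  have hp0 : 0 < p := lt_of_le_of_ne hp.1 (by rintro rfl; linarith)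
  have hp1 : p < 1 := lt_of_le_of_ne hp.2 (by rintro rfl; linarith)
  obtain ⟨s, hs⟩ := hloc p ⟨hp0, hp1⟩
  obtain ⟨ε, hε, hball⟩ := Metric.eventually_nhds_iff.1 hs
  set δ := min (ε / 2) (min (p / 2) ((1 - p) / 2)) with hδ
  have hδ0 : 0 < δ := by
    simp only [hδ, lt_min_iff]; refine ⟨by linarith, by linarith, by linarith⟩
  have hδ1 : δ ≤ ε / 2 := min_le_left _ _
  have hδ2 : δ ≤ p / 2 := (min_le_right _ _).trans (min_le_left _ _)
  have hδ3 : δ ≤ (1 - p) / 2 := (min_le_right _ _).trans (min_le_right _ _)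
  have h1 := @hball (p - δ) (by rw [Real.dist_eq, abs_lt]; constructor <;> linarith)
  have h2 := @hball (p + δ) (by rw [Real.dist_eq, abs_lt]; constructor <;> linarith)
  have h3 := hmin' (p - δ) ⟨by linarith, by linarith⟩
  have h4 := hmin' (p + δ) ⟨by linarith, by linarith⟩
  have h5 : ψ (p - δ) = ψ m := by
    refine le_antisymm ?_ h3
    rw [← hpm] at h4 ⊢
    simp only [hψ] at h4 ⊢
    nlinarith
  have := hpleast ⟨⟨by linarith, by linarith⟩, h5⟩
  linarith

theorem affine_eq_linear_add {E : Type*} [AddCommGroup E] [Module ℝ E] (D : E →ᵃ[ℝ] ℝ) (x p : E) :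
    D x = D.linear (x - p) + D p := by
  have := D.linearMap_vsub x p
  simp only [vsub_eq_sub] at this
  linarith

theorem linear_zero_on_direction {E : Type*} [AddCommGroup E] [Module ℝ E] (D : E →ᵃ[ℝ] ℝ)
    (W : Set E) (a : ℝ) (hD : ∀ x ∈ W, D x = a) :
    (affineSpan ℝ W).direction ≤ LinearMap.ker D.linear := by
  rw [direction_affineSpan, vectorSpan_def, Submodule.span_le]
  rintro _ ⟨x, hx, y, hy, rfl⟩
  simp only [SetLike.mem_coe, LinearMap.mem_ker]
  rw [D.linearMap_vsub, hD x hx, hD y hy]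
  simp

/-- Key step: the wall condition at one point propagates to the whole cell. -/
theorem wall_le {n : ℕ} (hn : 1 ≤ n) (A W : Set (EuclideanSpace ℝ (Fin n)))
    (hWne : W.Nonempty) (hW : IsExposed ℝ A W)
    (hdim : Module.finrank ℝ (affineSpan ℝ W).direction = n - 1)
    (D : EuclideanSpace ℝ (Fin n) →ᵃ[ℝ] ℝ) (hD : ∀ x ∈ W, D x = 0)
    (v : EuclideanSpace ℝ (Fin n)) (hvA : v ∈ A) (hvW : v ∉ W) (hv : 0 ≤ D v) :
    ∀ x ∈ A, 0 ≤ D x := by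
  obtain ⟨l, hl⟩ := hW hWne
  obtain ⟨p, hp⟩ := hWne
  have hpA : p ∈ A ∧ ∀ y ∈ A, l y ≤ l p := by rw [hl] at hp; exact hp
  have hlp : ∀ y ∈ W, l y = l p := by
    intro y hy
    have hy' : y ∈ A ∧ ∀ z ∈ A, l z ≤ l y := by rw [hl] at hy; exact hy
    exact le_antisymm (hpA.2 y hy'.1) (hy'.2 p hpA.1)
  have hlv : l v < l p := by
    refine lt_of_le_of_ne (hpA.2 v hvA) fun h => hvW ?_
    rw [hl]
    exact ⟨hvA, fun y hy => h ▸ hpA.2 y hy⟩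
  set L : EuclideanSpace ℝ (Fin n) →ₗ[ℝ] ℝ := l.toLinearMap with hL
  have hL0 : L ≠ 0 := by
    intro h0
    have h1 : L v = l v := rfl
    have h2 : L p = l p := rfl
    rw [h0] at h1 h2
    simp at h1 h2
    linarith
  have hker1 : (affineSpan ℝ W).direction ≤ LinearMap.ker L :=
    linear_zero_on_direction L.toAffineMap W (l p) hlp
  have hker2 := linear_zero_on_direction D W 0 hD
  have hfr : Module.finrank ℝ (LinearMap.ker L) < n := by
    have := Submodule.finrank_lt (s := LinearMap.ker L) (by
      rwa [Ne, LinearMap.ker_eq_top])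
    simpa using this
  have hEq : (affineSpan ℝ W).direction = LinearMap.ker L :=
    Submodule.eq_of_le_of_finrank_le hker1 (by omega)
  have hmem : D.linear ∈ Submodule.span ℝ (Set.range (fun _ : Unit => L)) := by
    apply mem_span_of_iInf_ker_le_ker
    rw [iInf_const, ← hEq]
    exact hker2
  rw [Set.range_const, Submodule.mem_span_singleton] at hmem
  obtain ⟨α, hα⟩ := hmem
  have hform : ∀ x, D x = α * (l x - l p) := by
    intro x
    rw [affine_eq_linear_add D x p, hD p hp, ← hα]
    simp [hL]
  intro x hx
  rw [hform] at hv ⊢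
  have hα0 : α ≤ 0 := by
    by_contra! h
    nlinarith
  have := hpA.2 x hx
  nlinarith

theorem finrank_direction_of_interior {n : ℕ} (A : Set (EuclideanSpace ℝ (Fin n)))
    (hA : (interior A).Nonempty) : Module.finrank ℝ (affineSpan ℝ A).direction = n := by
  have : affineSpan ℝ A = ⊤ := by
    rw [eq_top_iff, ← IsOpen.affineSpan_eq_top isOpen_interior hA]
    exact affineSpan_mono ℝ interior_subset
  rw [this, AffineSubspace.direction_top, finrank_top]
  simp

/-- Points outside a proper affine span are dense, simultaneously for finitely many spans. -/
theorem dense_generic {n k : ℕ} (W : Fin k → Fin k → Set (EuclideanSpace ℝ (Fin n)))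
    (y : EuclideanSpace ℝ (Fin n)) :
    Dense {x | ∀ i j, Module.finrank ℝ (affineSpan ℝ (W i j)).direction + 2 ≤ n →
      x ∉ affineSpan ℝ (insert y (W i j))} := by
  apply MeasureTheory.Measure.dense_of_ae (μ := MeasureTheory.volume)
  rw [MeasureTheory.ae_all_iff]
  intro i
  rw [MeasureTheory.ae_all_iff]
  intro j
  by_cases hd : Module.finrank ℝ (affineSpan ℝ (W i j)).direction + 2 ≤ n
  · have hne : affineSpan ℝ (insert y (W i j)) ≠ ⊤ := by
      intro htop
      have h1 := finrank_vectorSpan_insert_le_set ℝ (W i j) y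
      rw [← direction_affineSpan, ← direction_affineSpan, htop, AffineSubspace.direction_top,
        finrank_top, finrank_euclideanSpace_fin] at h1
      omega
    have h0 := MeasureTheory.Measure.addHaar_affineSubspace MeasureTheory.volume _ hne
    filter_upwards [MeasureTheory.compl_mem_ae_iff.2 h0] with x hx _
    exact hx
  · exact Filter.Eventually.of_forall fun x hx => absurd hx hd

theorem concavity_criterion_across_walls {n : ℕ} (hn : 1 ≤ n)
    (k : ℕ) (Δ : Fin k → Set (EuclideanSpace ℝ (Fin n)))
    (hpoly : ∀ i, ∃ (V G : Finset (EuclideanSpace ℝ (Fin n))), V.Nonempty ∧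
      Δ i = convexHull ℝ (V : Set (EuclideanSpace ℝ (Fin n))) +
        {x | ∃ c : G → ℝ, (∀ g, 0 ≤ c g) ∧ x = ∑ g, c g • (g : EuclideanSpace ℝ (Fin n))})
    (hint : ∀ i, (interior (Δ i)).Nonempty)
    (hcover : ⋃ i, Δ i = Set.univ)
    (hface : ∀ i j, i ≠ j →
      IsExposed ℝ (Δ i) (Δ i ∩ Δ j) ∧ IsExposed ℝ (Δ j) (Δ i ∩ Δ j))
    (h : EuclideanSpace ℝ (Fin n) → ℝ) (hcont : Continuous h)
    (g : Fin k → (EuclideanSpace ℝ (Fin n) →ᵃ[ℝ] ℝ))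
    (hg : ∀ i, ∀ x ∈ Δ i, h x = g i x) :
    ConcaveOn ℝ Set.univ h ↔
      ∀ i j, Module.finrank ℝ (affineSpan ℝ (Δ i ∩ Δ j)).direction = n - 1 →
        ∃ v ∈ Δ j \ Δ i, h v ≤ g i v := by
  constructor
  · intro hconc i j hdim
    have hex : ∃ v ∈ Δ j, v ∉ Δ i := by
      by_contra! hsub
      rw [Set.inter_eq_right.2 hsub, finrank_direction_of_interior _ (hint j)] at hdim
      omega
    obtain ⟨v, hvj, hvi⟩ := hex
    refine ⟨v, ⟨hvj, hvi⟩, ?_⟩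
    obtain ⟨p, hp⟩ := hint i
    -- move slightly from `p` towards `v`, staying in the cell
    have htend : Filter.Tendsto (fun t : ℝ => AffineMap.lineMap p v t)
        (nhdsWithin 0 (Set.Ioi 0)) (nhds p) := by
      have hc : Continuous (fun t : ℝ => AffineMap.lineMap p v t) :=
        AffineMap.lineMap_continuous
      have := hc.tendsto 0
      simp only [AffineMap.lineMap_apply_zero] at this
      exact this.mono_left nhdsWithin_le_nhds
    have hev := htend.eventually (isOpen_interior.mem_nhds hp)
    have hev2 : ∀ᶠ t : ℝ in nhdsWithin 0 (Set.Ioi 0), t ∈ Set.Ioo (0:ℝ) 1 :=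
      Ioo_mem_nhdsGT one_pos
    obtain ⟨t, ht1, ht2⟩ := (hev.and hev2).exists
    have hc := hconc.2 (Set.mem_univ p) (Set.mem_univ v)
      (by linarith [ht2.2] : (0:ℝ) ≤ 1 - t) ht2.1.le (by ring)
    have hpt : (1 - t) • p + t • v = AffineMap.lineMap p v t := by
      rw [AffineMap.lineMap_apply_module]
    rw [hpt, hg i _ (interior_subset ht1), hg i p (interior_subset hp),
      AffineMap.apply_lineMap, AffineMap.lineMap_apply_module] at hc
    simp only [smul_eq_mul] at hc
    have := ht2.1
    nlinarith
  · intro hwall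
    have hclosed : ∀ i, IsClosed (Δ i) := by
      intro i
      obtain ⟨V, G, -, hVG⟩ := hpoly i
      rw [hVG]
      exact isClosed_polyhedron V G
    -- local upper support at generic points
    have hlocal : ∀ p, (∀ i j, p ∈ Δ i ∩ Δ j →
        n < Module.finrank ℝ (affineSpan ℝ (Δ i ∩ Δ j)).direction + 2) →
        ∃ i, p ∈ Δ i ∧ ∀ᶠ x in nhds p, h x ≤ g i x := by
      intro p hp
      obtain ⟨i, hi⟩ := Set.mem_iUnion.1 (hcover ▸ Set.mem_univ p : p ∈ ⋃ i, Δ i)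
      refine ⟨i, hi, ?_⟩
      have hall : ∀ᶠ x in nhds p, ∀ j, p ∉ Δ j → x ∉ Δ j := by
        rw [Filter.eventually_all]
        intro j
        by_cases hj : p ∈ Δ j
        · exact Filter.Eventually.of_forall fun x hx => absurd hj hx
        · filter_upwards [(hclosed j).isOpen_compl.mem_nhds hj] with x hx _
          exact hx
      filter_upwards [hall] with x hx
      obtain ⟨j, hj⟩ := Set.mem_iUnion.1 (hcover ▸ Set.mem_univ x : x ∈ ⋃ i, Δ i)
      have hpj : p ∈ Δ j := by
        by_contra hpj
        exact hx j hpj hj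
      have hdim := hp i j ⟨hi, hpj⟩
      have hle : Module.finrank ℝ (affineSpan ℝ (Δ i ∩ Δ j)).direction ≤ n := by
        simpa using Submodule.finrank_le (affineSpan ℝ (Δ i ∩ Δ j)).direction
      have hD : ∀ z ∈ Δ i ∩ Δ j, (g i - g j) z = 0 := by
        intro z hz
        have h1 := hg i z hz.1
        have h2 := hg j z hz.2
        simp only [AffineMap.coe_sub, Pi.sub_apply]
        linarith
      suffices hs : 0 ≤ (g i - g j) x by
        rw [hg j x hj]
        simp only [AffineMap.coe_sub, Pi.sub_apply] at hs
        linarith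
      rcases (by omega : Module.finrank ℝ (affineSpan ℝ (Δ i ∩ Δ j)).direction = n ∨
        Module.finrank ℝ (affineSpan ℝ (Δ i ∩ Δ j)).direction = n - 1) with hd | hd
      · have htop : (affineSpan ℝ (Δ i ∩ Δ j)).direction = ⊤ :=
          Submodule.eq_top_of_finrank_eq (by simpa using hd)
        have hk := linear_zero_on_direction (g i - g j) _ 0 hD
        rw [htop, top_le_iff, LinearMap.ker_eq_top] at hk
        rw [affine_eq_linear_add (g i - g j) x p, hk, hD p ⟨hi, hpj⟩]
        simp
      · have hij : i ≠ j := by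
          rintro rfl
          rw [Set.inter_self, finrank_direction_of_interior _ (hint i)] at hd
          omega
        obtain ⟨v, hv, hvle⟩ := hwall i j hd
        refine wall_le hn (Δ j) (Δ i ∩ Δ j) ⟨p, hi, hpj⟩ (hface i j hij).2 hd
          (g i - g j) hD v hv.1 (fun hvW => hv.2 hvW.1) ?_ x hj
        rw [hg j v hv.1] at hvle
        simp only [AffineMap.coe_sub, Pi.sub_apply]
        linarith
    -- concavity inequality on generic segments, then by density on all
    have hseg : ∀ t ∈ Set.Icc (0:ℝ) 1, ∀ x y,
        (1 - t) * h x + t * h y ≤ h (AffineMap.lineMap x y t) := by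
      intro t ht x y
      have hcl : IsClosed {x | (1 - t) * h x + t * h y ≤ h (AffineMap.lineMap x y t)} := by
        refine isClosed_le (by fun_prop) (hcont.comp ?_)
        simp only [AffineMap.lineMap_apply_module]
        fun_prop
      have hdense := dense_generic (fun i j => Δ i ∩ Δ j) y
      refine hcl.closure_subset_iff.2 ?_ (hdense x)
      intro x hx
      have hlm : Continuous (fun t : ℝ => AffineMap.lineMap x y t) :=
        AffineMap.lineMap_continuous
      have := chord_le (fun t => h (AffineMap.lineMap x y t)) (hcont.comp hlm) ?_ t ht
      · simpa using this
      · intro u hu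
        obtain ⟨i, hi, hev⟩ := hlocal (AffineMap.lineMap x y u) (by
          intro i j hij
          by_contra! hle
          refine hx i j hle ?_
          have hy : y ∈ affineSpan ℝ (insert y (Δ i ∩ Δ j)) :=
            subset_affineSpan ℝ _ (Set.mem_insert _ _)
          have hq : AffineMap.lineMap x y u ∈ affineSpan ℝ (insert y (Δ i ∩ Δ j)) :=
            subset_affineSpan ℝ _ (Set.mem_insert_of_mem _ hij)
          have hxe : x = AffineMap.lineMap y (AffineMap.lineMap x y u) (1 - u)⁻¹ := by
            have hu1 : 1 - u ≠ 0 := by linarith [hu.2]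
            simp only [AffineMap.lineMap_apply_module, smul_add, smul_smul, inv_mul_cancel₀ hu1]
            have : (1 - (1 - u)⁻¹) = -((1 - u)⁻¹ * u) := by field_simp; ring
            rw [this]
            module
          rw [hxe]
          exact AffineMap.lineMap_mem _ hy hq)
        refine ⟨(g i).linear (y - x), ?_⟩
        filter_upwards [hlm.continuousAt.eventually hev] with w hw
        refine hw.trans (le_of_eq ?_)
        rw [hg i _ hi, AffineMap.apply_lineMap, AffineMap.apply_lineMap]
        simp only [AffineMap.lineMap_apply_module, smul_eq_mul]
        rw [affine_eq_linear_add (g i) y x]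
        ring
    refine ⟨convex_univ, ?_⟩
    intro x _ y _ a b ha hb hab
    have := hseg b ⟨hb, by linarith⟩ x y
    rw [AffineMap.lineMap_apply_module] at this
    have ha' : 1 - b = a := by linarith
    rw [ha'] at this
    simpa using this
end
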